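/- Under the hypotheses of the previous localized identity, with η supported in {|x| ≥ ρ/2} ∩ {|x| ≤ (1−δ/2)φ(x)}, η = 1 on U_{ρ,δ} = {ρ < |x| < (1−δ)φ(x)}, and λ < 0, one has −λ ∫_Ω η φ² dx ≤ 4μρ^{-2}(1 − (1−δ/2)^{n-2})^{-2} + (1/2)‖Δη‖_{L^∞(Ω)}. In particular, if λ = λ_1^ε → −∞ as ε → 0, then ∫_{U_{ρ,δ}} (φ_1^ε)² dx → 0. -/

import Mathlib

open MeasureTheory Filter

/-- The Laplacian of a scalar function on `ℝⁿ`, as the trace of the second derivative. -/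
noncomputable def lap {n : ℕ} (f : EuclideanSpace ℝ (Fin n) → ℝ)
    (x : EuclideanSpace ℝ (Fin n)) : ℝ :=
  ∑ i : Fin n,
    fderiv ℝ (fun y => fderiv ℝ f y (EuclideanSpace.single i 1)) x (EuclideanSpace.single i 1)

/-!
The argument is a localized energy identity. Multiply the equation `-Δg - V g = λ g` by `η g` and
use `g Δg = ½ Δ(g²) - |∇g|²`; two integrations by parts move the Laplacian onto the cutoff, giving
`-λ ∫ η g² = ∫ η V g² + ½ ∫ Δη g² - ∫ η |∇g|²`.
The gradient term has a favourable sign, and on the support of `η` the potential is bounded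
uniformly in `ε`, since there `‖x‖` stays away from `0` and `‖x‖ / φ x` stays away from `1`. Hence
`-λ ∫ η g²` is bounded independently of `ε`, and `λ → -∞` forces `∫ η g² → 0`.
-/

open scoped Gradient Topology

section Integration

variable {α : Type*} [MeasurableSpace α] {ν : Measure α} {f w : α → ℝ} {s : Set α} {K : ℝ}

lemma integrable_mul_of_hasCompactSupport [TopologicalSpace α] [OpensMeasurableSpace α]
    [IsFiniteMeasureOnCompacts ν] (hf : Continuous f) (hfc : HasCompactSupport f)
    (hw : Continuous w) : Integrable (fun x => f x * w x) ν :=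
  (hf.mul hw).integrable_of_hasCompactSupport hfc.mul_right

lemma setIntegral_mul_of_support_subset (hfs : Function.support f ⊆ s) (w : α → ℝ) :
    ∫ x in s, f x * w x ∂ν = ∫ x, f x * w x ∂ν :=
  setIntegral_eq_integral_of_forall_compl_eq_zero fun x hx => by
    rw [Function.notMem_support.mp fun h => hx (hfs h), zero_mul]

lemma integral_mul_le_of_support_subset (hfs : Function.support f ⊆ s) (hfK : ∀ x, f x ≤ K)
    (hw0 : ∀ x, 0 ≤ w x) (hw : IntegrableOn w s ν) (hfw : Integrable (fun x => f x * w x) ν) :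
    ∫ x, f x * w x ∂ν ≤ K * ∫ x in s, w x ∂ν := by
  rw [← setIntegral_mul_of_support_subset hfs, ← integral_const_mul]
  exact integral_mono hfw.integrableOn (hw.const_mul K) fun x =>
    mul_le_mul_of_nonneg_right (hfK x) (hw0 x)

-- `{f = 1}` is a measurable set between `s` and the whole space, where `w = f w`.
lemma setIntegral_le_integral_mul_of_eq_one (hf : Measurable f) (hf0 : ∀ x, 0 ≤ f x)
    (hfs : ∀ x ∈ s, f x = 1) (hw0 : ∀ x, 0 ≤ w x) (hfw : Integrable (fun x => f x * w x) ν) :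
    ∫ x in s, w x ∂ν ≤ ∫ x, f x * w x ∂ν := by
  have meas : MeasurableSet (f ⁻¹' {1}) := hf (measurableSet_singleton 1)
  have agree : Set.EqOn w (fun x => f x * w x) (f ⁻¹' {1}) := fun x (hx : f x = 1) => by
    simp only [hx, one_mul]
  calc ∫ x in s, w x ∂ν ≤ ∫ x in f ⁻¹' {1}, w x ∂ν :=
        setIntegral_mono_set ((integrableOn_congr_fun agree meas).mpr hfw.integrableOn)
          (ae_of_all _ hw0) (LE.le.eventuallyLE hfs)
    _ = ∫ x in f ⁻¹' {1}, f x * w x ∂ν := setIntegral_congr_fun meas agree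
    _ ≤ ∫ x, f x * w x ∂ν :=
        setIntegral_le_integral hfw (ae_of_all _ fun x => mul_nonneg (hf0 x) (hw0 x))

lemma tendsto_zero_of_mul_le {ι : Type*} {l : Filter ι} {a I : ι → ℝ} {M : ℝ}
    (ha : Tendsto a l atTop) (hI : ∀ᶠ i in l, 0 ≤ I i) (hM : ∀ᶠ i in l, a i * I i ≤ M) :
    Tendsto I l (𝓝 0) := by
  refine squeeze_zero' hI ?_ (ha.const_div_atTop M)
  filter_upwards [ha.eventually_gt_atTop 0, hM] with i hpos hle
  rwa [le_div_iff₀' hpos]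

lemma tendsto_setIntegral_zero_of_mul_integral_le {ι : Type*} {l : Filter ι} {a : ι → ℝ}
    {u : ι → α → ℝ} {M : ℝ} (hf : Measurable f) (hf0 : ∀ x, 0 ≤ f x) (hfs : ∀ x ∈ s, f x = 1)
    (hu0 : ∀ i x, 0 ≤ u i x) (hfu : ∀ᶠ i in l, Integrable (fun x => f x * u i x) ν)
    (ha : Tendsto a l atTop) (hM : ∀ᶠ i in l, a i * ∫ x, f x * u i x ∂ν ≤ M) :
    Tendsto (fun i => ∫ x in s, u i x ∂ν) l (𝓝 0) := by
  refine squeeze_zero' (Eventually.of_forall fun i => integral_nonneg (hu0 i))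
    (hfu.mono fun i hi => setIntegral_le_integral_mul_of_eq_one hf hf0 hfs (hu0 i) hi) ?_
  exact tendsto_zero_of_mul_le ha
    (Eventually.of_forall fun i => integral_nonneg fun x => mul_nonneg (hf0 x) (hu0 i x)) hM

end Integration

section SecondDirDeriv

variable {E : Type*} [NormedAddCommGroup E] [NormedSpace ℝ E] {f g : E → ℝ}

/-- The pure second derivative `∂ᵥ²f`; `lap` is by definition the sum of these over the standard
basis. -/
noncomputable def secondDirDeriv (v : E) (f : E → ℝ) (x : E) : ℝ :=
  fderiv ℝ (fun y => fderiv ℝ f y v) x v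

lemma contDiff_one_fderiv_apply_const (hf : ContDiff ℝ 2 f) (v : E) :
    ContDiff ℝ 1 (fun y => fderiv ℝ f y v) :=
  (hf.fderiv_right (m := 1) (by norm_num)).clm_apply contDiff_const

lemma continuous_fderiv_apply_const (hf : ContDiff ℝ 1 f) (v : E) :
    Continuous (fun x => fderiv ℝ f x v) :=
  (hf.continuous_fderiv one_ne_zero).clm_apply continuous_const

lemma continuous_secondDirDeriv (hf : ContDiff ℝ 2 f) (v : E) :
    Continuous (secondDirDeriv v f) :=
  continuous_fderiv_apply_const (contDiff_one_fderiv_apply_const hf v) v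

lemma tsupport_secondDirDeriv_subset (v : E) (f : E → ℝ) :
    tsupport (secondDirDeriv v f) ⊆ tsupport f :=
  (tsupport_fderiv_apply_subset ℝ v).trans (tsupport_fderiv_apply_subset ℝ v)

lemma secondDirDeriv_mul (hf : ContDiff ℝ 2 f) (hg : ContDiff ℝ 2 g) (v x : E) :
    secondDirDeriv v (fun y => f y * g y) x =
      f x * secondDirDeriv v g x + secondDirDeriv v f x * g x
        + 2 * (fderiv ℝ f x v * fderiv ℝ g x v) := by
  have df : Differentiable ℝ f := hf.differentiable two_ne_zero
  have dg : Differentiable ℝ g := hg.differentiable two_ne_zero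
  have df' := (contDiff_one_fderiv_apply_const hf v).differentiable one_ne_zero
  have dg' := (contDiff_one_fderiv_apply_const hg v).differentiable one_ne_zero
  have first : (fun y => fderiv ℝ (fun z => f z * g z) y v) =
      fun y => f y * fderiv ℝ g y v + g y * fderiv ℝ f y v := by
    funext y
    simp [fderiv_fun_mul (df y) (dg y)]
  simp only [secondDirDeriv, first,
    fderiv_fun_add ((df x).fun_mul (dg' x)) ((dg x).fun_mul (df' x)),
    fderiv_fun_mul (df x) (dg' x), fderiv_fun_mul (dg x) (df' x), add_apply, smul_apply,
    smul_eq_mul]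
  ring

variable [MeasurableSpace E] [BorelSpace E] [FiniteDimensional ℝ E]
  {ν : Measure E} [ν.IsAddHaarMeasure]

lemma integral_mul_fderiv_eq_neg_of_hasCompactSupport (hf : ContDiff ℝ 1 f)
    (hfc : HasCompactSupport f) (hg : ContDiff ℝ 1 g) (v : E) :
    ∫ x, f x * fderiv ℝ g x v ∂ν = -∫ x, fderiv ℝ f x v * g x ∂ν :=
  integral_mul_fderiv_eq_neg_fderiv_mul_of_integrable
    (integrable_mul_of_hasCompactSupport (continuous_fderiv_apply_const hf v)
      (hfc.fderiv_apply (𝕜 := ℝ) v) hg.continuous)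
    (integrable_mul_of_hasCompactSupport hf.continuous hfc (continuous_fderiv_apply_const hg v))
    (integrable_mul_of_hasCompactSupport hf.continuous hfc hg.continuous)
    (fun x _ => hf.differentiable one_ne_zero x) (fun x _ => hg.differentiable one_ne_zero x)

lemma integral_mul_secondDirDeriv (hf : ContDiff ℝ 2 f) (hfc : HasCompactSupport f)
    (hg : ContDiff ℝ 2 g) (v : E) :
    ∫ x, f x * secondDirDeriv v g x ∂ν = ∫ x, secondDirDeriv v f x * g x ∂ν := by
  unfold secondDirDeriv
  rw [integral_mul_fderiv_eq_neg_of_hasCompactSupport (hf.of_le one_le_two) hfc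
      (contDiff_one_fderiv_apply_const hg v) v,
    integral_mul_fderiv_eq_neg_of_hasCompactSupport (contDiff_one_fderiv_apply_const hf v)
      (hfc.fderiv_apply (𝕜 := ℝ) v) (hg.of_le one_le_two) v, neg_neg]

end SecondDirDeriv

section Laplacian

variable {n : ℕ} {f g : EuclideanSpace ℝ (Fin n) → ℝ}

lemma lap_eq_sum_secondDirDeriv (f : EuclideanSpace ℝ (Fin n) → ℝ)
    (x : EuclideanSpace ℝ (Fin n)) :
    lap f x = ∑ i, secondDirDeriv (EuclideanSpace.single i 1) f x :=
  rfl

lemma continuous_lap (hf : ContDiff ℝ 2 f) : Continuous (lap f) :=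
  continuous_finsetSum _ fun _ _ => continuous_secondDirDeriv hf _

lemma support_lap_subset (f : EuclideanSpace ℝ (Fin n) → ℝ) :
    Function.support (lap f) ⊆ tsupport f := by
  intro x hx
  obtain ⟨i, -, hi⟩ := Finset.exists_ne_zero_of_sum_ne_zero hx
  exact tsupport_secondDirDeriv_subset _ f (subset_tsupport _ hi)

lemma lap_mul (hf : ContDiff ℝ 2 f) (hg : ContDiff ℝ 2 g) (x : EuclideanSpace ℝ (Fin n)) :
    lap (fun y => f y * g y) x =
      f x * lap g x + lap f x * g x + 2 * inner ℝ (∇ f x) (∇ g x) := by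
  have gradients : inner ℝ (∇ f x) (∇ g x) =
      ∑ i, fderiv ℝ f x (EuclideanSpace.single i 1) *
        fderiv ℝ g x (EuclideanSpace.single i 1) := by
    rw [← (EuclideanSpace.basisFun (Fin n) ℝ).sum_inner_mul_inner]
    simp [inner_gradient_left, inner_gradient_right]
  simp only [lap_eq_sum_secondDirDeriv, secondDirDeriv_mul hf hg, gradients,
    Finset.sum_add_distrib, Finset.mul_sum, Finset.sum_mul]

lemma lap_sq (hf : ContDiff ℝ 2 f) (x : EuclideanSpace ℝ (Fin n)) :
    lap (fun y => f y ^ 2) x = 2 * (f x * lap f x) + 2 * ‖∇ f x‖ ^ 2 := by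
  simp only [sq (f _), lap_mul hf hf, real_inner_self_eq_norm_sq]
  ring

lemma integral_mul_lap (hf : ContDiff ℝ 2 f) (hfc : HasCompactSupport f) (hg : ContDiff ℝ 2 g) :
    ∫ x, f x * lap g x = ∫ x, lap f x * g x := by
  simp only [lap_eq_sum_secondDirDeriv, Finset.mul_sum, Finset.sum_mul]
  rw [integral_finsetSum _ fun i _ => integrable_mul_of_hasCompactSupport hf.continuous hfc
      (continuous_secondDirDeriv hg _),
    integral_finsetSum _ fun i _ => integrable_mul_of_hasCompactSupport
      (continuous_secondDirDeriv hf _)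
      (hfc.mono' ((subset_tsupport _).trans (tsupport_secondDirDeriv_subset _ f))) hg.continuous]
  exact Finset.sum_congr rfl fun i _ => integral_mul_secondDirDeriv hf hfc hg _

end Laplacian

section LocalizedEnergy

variable {n : ℕ} {η g V : EuclideanSpace ℝ (Fin n) → ℝ} {lam C K : ℝ}
  {Ω : Set (EuclideanSpace ℝ (Fin n))}

lemma cutoff_mul_potential_mul_sq
    (heig : ∀ x ∈ Function.support η, -lap g x - V x * g x = lam * g x)
    (x : EuclideanSpace ℝ (Fin n)) :
    η x * (V x * g x ^ 2) = -lam * (η x * g x ^ 2) - η x * (g x * lap g x) := by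
  by_cases hx : η x = 0
  · simp [hx]
  · linear_combination -(η x * g x) * heig x hx

-- On the support of `η` the equation expresses `V g²` through `g` and `Δg`, which are continuous.
lemma integrable_cutoff_mul_potential_mul_sq (hη : Continuous η) (hηc : HasCompactSupport η)
    (hg : ContDiff ℝ 2 g)
    (heig : ∀ x ∈ Function.support η, -lap g x - V x * g x = lam * g x) :
    Integrable (fun x => η x * (V x * g x ^ 2)) := by
  simp only [cutoff_mul_potential_mul_sq heig]
  exact ((integrable_mul_of_hasCompactSupport hη hηc (hg.continuous.pow 2)).const_mul _).sub
    (integrable_mul_of_hasCompactSupport hη hηc (hg.continuous.mul (continuous_lap hg)))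

theorem localized_energy_identity (hη : ContDiff ℝ 2 η) (hηc : HasCompactSupport η)
    (hg : ContDiff ℝ 2 g)
    (heig : ∀ x ∈ Function.support η, -lap g x - V x * g x = lam * g x) :
    -lam * ∫ x, η x * g x ^ 2 =
      (∫ x, η x * (V x * g x ^ 2)) + 1 / 2 * (∫ x, lap η x * g x ^ 2)
        - ∫ x, η x * ‖∇ g x‖ ^ 2 := by
  have hsq : ContDiff ℝ 2 (fun x => g x ^ 2) := hg.pow 2
  have int_sq : Integrable (fun x => η x * g x ^ 2) :=
    integrable_mul_of_hasCompactSupport hη.continuous hηc hsq.continuous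
  have int_lap_sq : Integrable (fun x => η x * lap (fun y => g y ^ 2) x) :=
    integrable_mul_of_hasCompactSupport hη.continuous hηc (continuous_lap hsq)
  have int_mul_lap : Integrable (fun x => η x * (g x * lap g x)) :=
    integrable_mul_of_hasCompactSupport hη.continuous hηc (hg.continuous.mul (continuous_lap hg))
  have gradient_sq : ∀ x, η x * ‖∇ g x‖ ^ 2 =
      1 / 2 * (η x * lap (fun y => g y ^ 2) x) - η x * (g x * lap g x) := fun x => by
    rw [lap_sq hg]; ring
  simp only [cutoff_mul_potential_mul_sq heig, gradient_sq]
  rw [integral_sub (int_sq.const_mul _) int_mul_lap, integral_const_mul,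
    integral_sub (int_lap_sq.const_mul _) int_mul_lap, integral_const_mul,
    integral_mul_lap hη hηc hsq]
  ring

lemma neg_eigenvalue_mul_integral_le (hη : ContDiff ℝ 2 η) (hηc : HasCompactSupport η)
    (hη0 : ∀ x, 0 ≤ η x) (hg : ContDiff ℝ 2 g)
    (heig : ∀ x ∈ Function.support η, -lap g x - V x * g x = lam * g x)
    (hV : ∀ x ∈ Function.support η, V x ≤ C) :
    -lam * ∫ x, η x * g x ^ 2 ≤
      C * (∫ x, η x * g x ^ 2) + 1 / 2 * ∫ x, lap η x * g x ^ 2 := by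
  have gradient_nonneg : 0 ≤ ∫ x, η x * ‖∇ g x‖ ^ 2 :=
    integral_nonneg fun x => mul_nonneg (hη0 x) (sq_nonneg _)
  have potential_le : ∫ x, η x * (V x * g x ^ 2) ≤ C * ∫ x, η x * g x ^ 2 := by
    rw [← integral_const_mul]
    refine integral_mono (integrable_cutoff_mul_potential_mul_sq hη.continuous hηc hg heig)
      ((integrable_mul_of_hasCompactSupport hη.continuous hηc (hg.continuous.pow 2)).const_mul C)
      fun x => ?_
    by_cases hx : η x = 0
    · simp [hx]
    · nlinarith [mul_le_mul_of_nonneg_right (hV x hx) (mul_nonneg (hη0 x) (sq_nonneg (g x)))]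
  linarith [localized_energy_identity hη hηc hg heig]

theorem neg_eigenvalue_mul_integral_le_of_normalized (hη : ContDiff ℝ 2 η)
    (hηc : HasCompactSupport η) (hη01 : ∀ x, η x ∈ Set.Icc (0 : ℝ) 1) (hηΩ : tsupport η ⊆ Ω)
    (hK : ∀ x, lap η x ≤ K) (hg : ContDiff ℝ 2 g) (hnorm : ∫ x in Ω, g x ^ 2 = 1)
    (heig : ∀ x ∈ Function.support η, -lap g x - V x * g x = lam * g x)
    (hV : ∀ x ∈ Function.support η, V x ≤ C) (hC : 0 ≤ C) :
    -lam * ∫ x, η x * g x ^ 2 ≤ C + 1 / 2 * K := by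
  have hgΩ : IntegrableOn (fun x => g x ^ 2) Ω :=
    Integrable.of_integral_ne_zero (by rw [hnorm]; exact one_ne_zero)
  have mass_le : ∫ x, η x * g x ^ 2 ≤ 1 := by
    simpa only [hnorm, mul_one] using
      integral_mul_le_of_support_subset ((subset_tsupport η).trans hηΩ) (fun x => (hη01 x).2)
        (fun x => sq_nonneg (g x)) hgΩ
        (integrable_mul_of_hasCompactSupport hη.continuous hηc (hg.continuous.pow 2))
  have lap_le : ∫ x, lap η x * g x ^ 2 ≤ K := by
    simpa only [hnorm, mul_one] using
      integral_mul_le_of_support_subset ((support_lap_subset η).trans hηΩ) hK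
        (fun x => sq_nonneg (g x)) hgΩ
        (integrable_mul_of_hasCompactSupport (continuous_lap hη)
          (hηc.mono' (support_lap_subset η)) (hg.continuous.pow 2))
  linarith [neg_eigenvalue_mul_integral_le hη hηc (fun x => (hη01 x).1) hg heig hV,
    mul_le_mul_of_nonneg_left mass_le hC]

end LocalizedEnergy

section RegularizedPotential

variable {n : ℕ} {φf : EuclideanSpace ℝ (Fin n) → ℝ} {ε r θ ρ δ : ℝ} {x : EuclideanSpace ℝ (Fin n)}

/-- The potential `Ψ_ε` on `{‖x‖ < φ x}`, regularizing the Hardy-type weight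
`Ψ₀ = ‖x‖⁻² (1 - (‖x‖ / φ x)ⁿ⁻²)⁻²`, singular at the origin and on the boundary. The quotient is
written with two real powers, as in the main theorem. -/
noncomputable def regularizedPotential (φf : EuclideanSpace ℝ (Fin n) → ℝ) (ε : ℝ)
    (x : EuclideanSpace ℝ (Fin n)) : ℝ :=
  (‖x‖ + ε) ^ (-2 : ℝ)
    * (1 + ε - ‖x‖ ^ ((n : ℝ) - 2) * (φf x) ^ ((2 : ℝ) - n)) ^ (-2 : ℝ)

lemma regularizedPotential_le (hn : 2 < n) (hε : 0 ≤ ε) (hr : 0 < r) (hθ : θ ∈ Set.Ioo (0 : ℝ) 1)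
    (hrx : r ≤ ‖x‖) (hxθ : ‖x‖ ≤ θ * φf x) :
    regularizedPotential φf ε x ≤ r ^ (-2 : ℝ) * (1 - θ ^ ((n : ℝ) - 2)) ^ (-2 : ℝ) := by
  have hs : 0 < (n : ℝ) - 2 := sub_pos.mpr (by exact_mod_cast hn)
  have hφ : 0 < φf x := pos_of_mul_pos_right ((hr.trans_le hrx).trans_le hxθ) hθ.1.le
  have quotient_le : ‖x‖ ^ ((n : ℝ) - 2) * φf x ^ ((2 : ℝ) - n) ≤ θ ^ ((n : ℝ) - 2) := by
    rw [← neg_sub (n : ℝ) 2, Real.rpow_neg hφ.le, ← div_eq_mul_inv,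
      ← Real.div_rpow (norm_nonneg x) hφ.le]
    exact Real.rpow_le_rpow (by positivity) ((div_le_iff₀ hφ).mpr hxθ) hs.le
  have hθs : θ ^ ((n : ℝ) - 2) < 1 := Real.rpow_lt_one hθ.1.le hθ.2 hs
  exact mul_le_mul (Real.rpow_le_rpow_of_nonpos hr (by linarith) (by norm_num))
    (Real.rpow_le_rpow_of_nonpos (by linarith) (by linarith) (by norm_num))
    (Real.rpow_nonneg (by linarith) _) (by positivity)

lemma regularizedPotential_le_four_mul (hn : 2 < n) (hε : 0 ≤ ε) (hρ : 0 < ρ)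
    (hδ : δ ∈ Set.Ioo (0 : ℝ) 2) (hρx : ρ / 2 ≤ ‖x‖) (hxδ : ‖x‖ ≤ (1 - δ / 2) * φf x) :
    regularizedPotential φf ε x ≤
      4 * ρ ^ (-2 : ℝ) * (1 - (1 - δ / 2) ^ ((n : ℝ) - 2)) ^ (-2 : ℝ) := by
  have half : (ρ / 2) ^ (-2 : ℝ) = 4 * ρ ^ (-2 : ℝ) := by
    rw [Real.div_rpow hρ.le zero_le_two, Real.rpow_neg zero_le_two]
    norm_num
    ring
  rw [← half]
  exact regularizedPotential_le hn hε (half_pos hρ)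
    ⟨by linarith [hδ.2], by linarith [hδ.1]⟩ hρx hxδ

end RegularizedPotential

theorem eigenfunction_concentration_general {n : ℕ} (hn : 3 ≤ n)
    (ρ δ : ℝ) (hρ : 0 < ρ) (hδ : δ ∈ Set.Ioo (0 : ℝ) 1)
    (φf : EuclideanSpace ℝ (Fin n) → ℝ) (μ : ℝ) (hμ : 0 ≤ μ)
    (lam : ℝ → ℝ) (Φ : ℝ → EuclideanSpace ℝ (Fin n) → ℝ)
    (η : EuclideanSpace ℝ (Fin n) → ℝ) (hη : ContDiff ℝ 2 η) (hηcs : HasCompactSupport η)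
    (hη01 : ∀ x, η x ∈ Set.Icc (0 : ℝ) 1)
    (hηsupp : tsupport η ⊆
      {x : EuclideanSpace ℝ (Fin n) | ρ / 2 ≤ ‖x‖ ∧ ‖x‖ ≤ (1 - δ / 2) * φf x})
    (hηone : ∀ x : EuclideanSpace ℝ (Fin n), ρ < ‖x‖ → ‖x‖ < (1 - δ) * φf x → η x = 1)
    (K : ℝ) (hK : ∀ x, lap η x ≤ K)
    (hΦ : ∀ ε : ℝ, 0 < ε → ContDiff ℝ 2 (Φ ε))
    (hnorm : ∀ ε : ℝ, 0 < ε →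
      ∫ x in {x : EuclideanSpace ℝ (Fin n) | ‖x‖ < φf x}, Φ ε x ^ 2 = 1)
    (heig : ∀ ε : ℝ, 0 < ε → ∀ x : EuclideanSpace ℝ (Fin n), ‖x‖ < φf x →
      -lap (Φ ε) x - μ * regularizedPotential φf ε x * Φ ε x = lam ε * Φ ε x) :
    (∀ ε : ℝ, 0 < ε →
      -lam ε * ∫ x in {x : EuclideanSpace ℝ (Fin n) | ‖x‖ < φf x}, η x * Φ ε x ^ 2
        ≤ 4 * μ * ρ ^ (-2 : ℝ) * (1 - (1 - δ / 2) ^ ((n : ℝ) - 2)) ^ (-2 : ℝ) + 1 / 2 * K)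
    ∧ (Tendsto lam (𝓝[>] 0) atBot →
        Tendsto (fun ε =>
            ∫ x in {x : EuclideanSpace ℝ (Fin n) | ρ < ‖x‖ ∧ ‖x‖ < (1 - δ) * φf x}, Φ ε x ^ 2)
          (𝓝[>] 0) (𝓝 0)) := by
  have hηΩ : tsupport η ⊆ {x | ‖x‖ < φf x} := fun x hx => by
    obtain ⟨hlo, hup⟩ := hηsupp hx
    have hφ : 0 < φf x :=
      pos_of_mul_pos_right (((half_pos hρ).trans_le hlo).trans_le hup) (by linarith [hδ.2])
    exact hup.trans_lt (mul_lt_of_lt_one_left hφ (by linarith [hδ.1]))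
  set C : ℝ := 4 * μ * ρ ^ (-2 : ℝ) * (1 - (1 - δ / 2) ^ ((n : ℝ) - 2)) ^ (-2 : ℝ) with hC
  have hC0 : 0 ≤ C := by
    have : 0 ≤ 1 - (1 - δ / 2) ^ ((n : ℝ) - 2) := sub_nonneg.mpr <|
      Real.rpow_le_one (by linarith [hδ.2]) (by linarith [hδ.1])
        (sub_nonneg.mpr (by exact_mod_cast (Nat.le_succ 2).trans hn))
    positivity
  have potential_le : ∀ ε, 0 < ε → ∀ x ∈ Function.support η,
      μ * regularizedPotential φf ε x ≤ C := fun ε hε x hx => by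
    obtain ⟨hlo, hup⟩ := hηsupp (subset_tsupport η hx)
    rw [hC, mul_comm 4 μ, mul_assoc μ, mul_assoc μ]
    exact mul_le_mul_of_nonneg_left (regularizedPotential_le_four_mul hn hε.le hρ
      (Set.Ioo_subset_Ioo_right one_le_two hδ) hlo hup) hμ
  have bound : ∀ ε, 0 < ε → -lam ε * ∫ x, η x * Φ ε x ^ 2 ≤ C + 1 / 2 * K := fun ε hε =>
    neg_eigenvalue_mul_integral_le_of_normalized hη hηcs hη01 hηΩ hK (hΦ ε hε) (hnorm ε hε)
      (fun x hx => heig ε hε x (hηΩ (subset_tsupport η hx))) (potential_le ε hε) hC0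
  refine ⟨fun ε hε => ?_, fun hlam => ?_⟩
  · rw [setIntegral_mul_of_support_subset ((subset_tsupport η).trans hηΩ)]
    exact bound ε hε
  · exact tendsto_setIntegral_zero_of_mul_integral_le hη.continuous.measurable
      (fun x => (hη01 x).1) (fun x hx => hηone x hx.1 hx.2) (fun ε x => sq_nonneg (Φ ε x))
      (eventually_nhdsWithin_of_forall fun ε hε =>
        integrable_mul_of_hasCompactSupport hη.continuous hηcs ((hΦ ε hε).continuous.pow 2))
      (tendsto_neg_atBot_atTop.comp hlam) (eventually_nhdsWithin_of_forall bound)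

/-- Concentration estimate (Proposition 1, (21)): for the normalized first eigenfunctions
`φ₁^ε` of `−Δ − μΨ_ε` on `Ω = {|x| < φ(x)}`, with `η` a cutoff equal to `1` on
`U_{ρ,δ} = {ρ < |x| < (1−δ)φ(x)}` and supported in `{ρ/2 ≤ |x| ≤ (1−δ/2)φ(x)}`,
one has `−λ₁^ε ∫ η (φ₁^ε)² ≤ 4μρ⁻²(1 − (1−δ/2)^{n-2})⁻² + (1/2)‖Δη‖_∞`; in
particular, if `λ₁^ε → −∞` as `ε → 0⁺`, then `∫_{U_{ρ,δ}} (φ₁^ε)² → 0`. -/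
theorem eigenfunction_concentration {n : ℕ} (hn : 3 ≤ n)
    (ρ δ : ℝ) (hρ : 0 < ρ) (hδ : δ ∈ Set.Ioo (0:ℝ) 1)
    (φf : EuclideanSpace ℝ (Fin n) → ℝ)
    (hφpos : ∀ x, 0 < φf x)
    (hφhom : ∀ c : ℝ, 0 < c → ∀ x, φf (c • x) = φf x)
    (μ : ℝ) (hμ : (((n : ℝ) - 2) / 2) ^ 2 < μ)
    (lam : ℝ → ℝ) (Φ : ℝ → EuclideanSpace ℝ (Fin n) → ℝ)
    (η : EuclideanSpace ℝ (Fin n) → ℝ) (hη : ContDiff ℝ (⊤ : ℕ∞) η)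
    (hηcs : HasCompactSupport η)
    (hη01 : ∀ x, η x ∈ Set.Icc (0:ℝ) 1)
    (hηsupp : tsupport η ⊆
      {x : EuclideanSpace ℝ (Fin n) | ρ / 2 ≤ ‖x‖ ∧ ‖x‖ ≤ (1 - δ / 2) * φf x})
    (hηone : ∀ x : EuclideanSpace ℝ (Fin n), ρ < ‖x‖ → ‖x‖ < (1 - δ) * φf x → η x = 1)
    (K : ℝ) (hK : ∀ x, |lap η x| ≤ K)
    (hΦ : ∀ ε : ℝ, 0 < ε → ContDiff ℝ 2 (Φ ε))
    (hnorm : ∀ ε : ℝ, 0 < ε →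
      (∫ x in {x : EuclideanSpace ℝ (Fin n) | ‖x‖ < φf x}, (Φ ε x) ^ 2) = 1)
    (hlamneg : ∀ ε : ℝ, 0 < ε → lam ε < 0)
    (heig : ∀ ε : ℝ, 0 < ε →
      ∀ x : EuclideanSpace ℝ (Fin n), ‖x‖ < φf x →
        -lap (Φ ε) x
          - μ * ((‖x‖ + ε) ^ (-2 : ℝ)
              * (1 + ε - ‖x‖ ^ ((n : ℝ) - 2) * (φf x) ^ ((2 : ℝ) - n)) ^ (-2 : ℝ)) * Φ ε x
          = lam ε * Φ ε x) :
    (∀ ε : ℝ, 0 < ε →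
      -(lam ε) * ∫ x in {x : EuclideanSpace ℝ (Fin n) | ‖x‖ < φf x}, η x * (Φ ε x) ^ 2
        ≤ 4 * μ * ρ ^ (-2 : ℝ) * (1 - (1 - δ / 2) ^ ((n : ℝ) - 2)) ^ (-2 : ℝ)
          + (1 / 2) * K)
    ∧ (Tendsto lam (nhdsWithin 0 (Set.Ioi (0:ℝ))) atBot →
        Tendsto (fun ε =>
            ∫ x in {x : EuclideanSpace ℝ (Fin n) | ρ < ‖x‖ ∧ ‖x‖ < (1 - δ) * φf x},
              (Φ ε x) ^ 2)
          (nhdsWithin 0 (Set.Ioi (0:ℝ))) (nhds 0)) :=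
  eigenfunction_concentration_general hn ρ δ hρ hδ φf μ ((sq_nonneg _).trans hμ.le) lam Φ η
    (contDiff_infty.mp hη 2) hηcs hη01 hηsupp hηone K (fun x => (le_abs_self _).trans (hK x))
    hΦ hnorm heig
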